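/- arXiv:1712.09807 — 5 statements merged into one kernel-verified Lean document; each statement's English description precedes it below -/
import Mathlib

section
/- Let ν > 0, T > 0 and let f : [0,T]×[0,π] → ℝ be continuous. Suppose u : [0,T]×[0,π] → ℝ is continuous, has continuous partial derivatives ∂ₜu, ∂ₓu, ∂ₓ²u, satisfies the Burgers equation ∂ₜu − ν ∂ₓ²u + u ∂ₓu = f on [0,T]×[0,π], and satisfies the Dirichlet boundary conditions u(t,0) = u(t,π) = 0 for all t ∈ [0,T]. Then for every r ∈ [0,T] the energy identity holds: ∫₀^π u(r,x)² dx + 2ν ∫₀^r ∫₀^π (∂ₓu(s,x))² dx ds = ∫₀^π u(0,x)² dx + 2 ∫₀^r ∫₀^π f(s,x) u(s,x) dx ds. -/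
open MeasureTheory Set intervalIntegral

/-!
Multiply the equation by `u` and integrate over the space interval. By the Dirichlet conditions the
viscous term integrates by parts to `ν ∫ (∂ₓu)²`, while the advection term `u² ∂ₓu` is the
`x`-derivative of a function of `u` and contributes nothing. What remains is
`∫ u ∂ₜu + ν ∫ (∂ₓu)² = ∫ f u` at each time, and `u ∂ₜu = ∂ₜ(u²) / 2`, so integrating in time gives
the identity. The advection term vanishes in the same way for any continuous speed `φ(u)` in place
of `u`.
-/

open scoped Interval

section Rectangle

variable {E : Type*} [NormedAddCommGroup E] {F : ℝ → ℝ → E} {a b c d : ℝ}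

lemma integrableOn_uIoc_prod_of_continuousOn
    (hF : ContinuousOn F.uncurry ([[a, b]] ×ˢ [[c, d]])) :
    IntegrableOn F.uncurry (Ι a b ×ˢ Ι c d) :=
  (hF.integrableOn_compact (isCompact_uIcc.prod isCompact_uIcc)).mono_set
    (prod_mono uIoc_subset_uIcc uIoc_subset_uIcc)

variable [NormedSpace ℝ E]

lemma intervalIntegrable_intervalIntegral (hF : IntegrableOn F.uncurry (Ι a b ×ˢ Ι c d)) :
    IntervalIntegrable (fun t => ∫ x in c..d, F t x) volume a b := by
  rw [IntegrableOn, Measure.volume_eq_prod, ← Measure.prod_restrict] at hF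
  simp only [intervalIntegrable_iff, intervalIntegral_eq_integral_uIoc]
  exact hF.integral_prod_left.smul _

lemma integral_eq_sub_of_hasDerivWithinAt_uIcc [CompleteSpace E] {g g' : ℝ → E}
    (hg : ∀ t ∈ [[a, b]], HasDerivWithinAt g (g' t) [[a, b]] t)
    (hg' : IntervalIntegrable g' volume a b) :
    ∫ t in a..b, g' t = g b - g a :=
  integral_eq_sub_of_hasDeriv_right (fun t ht => (hg t ht).continuousWithinAt)
    (fun t ht => ((hg t (Ioo_subset_Icc_self ht)).hasDerivAt
      (Icc_mem_nhds ht.1 ht.2)).hasDerivWithinAt) hg'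

lemma integral_integral_eq_integral_sub_of_hasDerivWithinAt [CompleteSpace E] {w : ℝ → ℝ → E}
    (hw : ∀ t ∈ [[a, b]], ∀ x ∈ [[c, d]],
      HasDerivWithinAt (fun s => w s x) (F t x) [[a, b]] t)
    (hF : ContinuousOn F.uncurry ([[a, b]] ×ˢ [[c, d]])) :
    ∫ t in a..b, ∫ x in c..d, F t x = ∫ x in c..d, (w b x - w a x) := by
  rw [intervalIntegral_intervalIntegral_swap (integrableOn_uIoc_prod_of_continuousOn hF)]
  exact integral_congr fun x hx => integral_eq_sub_of_hasDerivWithinAt_uIcc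
    (fun t ht => hw t ht x hx) (hF.uncurry_right x hx).intervalIntegrable

end Rectangle

lemma two_mul_integral_integral_mul_eq_integral_sq_sub {a b c d : ℝ} {u ut : ℝ → ℝ → ℝ}
    (hu : ContinuousOn u.uncurry ([[a, b]] ×ˢ [[c, d]]))
    (hut : ContinuousOn ut.uncurry ([[a, b]] ×ˢ [[c, d]]))
    (hdt : ∀ t ∈ [[a, b]], ∀ x ∈ [[c, d]],
      HasDerivWithinAt (fun s => u s x) (ut t x) [[a, b]] t) :
    2 * ∫ t in a..b, ∫ x in c..d, u t x * ut t x
      = (∫ x in c..d, u b x ^ 2) - ∫ x in c..d, u a x ^ 2 := by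
  have hderiv : ∀ t ∈ [[a, b]], ∀ x ∈ [[c, d]],
      HasDerivWithinAt (fun s => u s x ^ 2) (2 * (u t x * ut t x)) [[a, b]] t :=
    fun t ht x hx => ((hdt t ht x hx).pow 2).congr_deriv (by ring)
  have hsq : ∀ t ∈ [[a, b]], IntervalIntegrable (fun x => u t x ^ 2) volume c d :=
    fun t ht => ((hu.uncurry_left t ht).pow 2).intervalIntegrable
  rw [← integral_sub (hsq b right_mem_uIcc) (hsq a left_mem_uIcc),
    ← integral_integral_eq_integral_sub_of_hasDerivWithinAt hderiv ((hu.mul hut).const_mul 2)]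
  simp only [intervalIntegral.integral_const_mul]

section Dirichlet

variable {a b : ℝ} {v v' v'' : ℝ → ℝ}

lemma integral_mul_deriv_deriv_eq_neg_integral_deriv_sq
    (hv : ∀ x ∈ [[a, b]], HasDerivWithinAt v (v' x) [[a, b]] x)
    (hv' : ∀ x ∈ [[a, b]], HasDerivWithinAt v' (v'' x) [[a, b]] x)
    (hv'' : IntervalIntegrable v'' volume a b) (ha : v a = 0) (hb : v b = 0) :
    ∫ x in a..b, v x * v'' x = -∫ x in a..b, v' x ^ 2 := by
  have hv'_int : IntervalIntegrable v' volume a b :=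
    ContinuousOn.intervalIntegrable fun x hx => (hv' x hx).continuousWithinAt
  simp [integral_mul_deriv_eq_deriv_mul_of_hasDerivWithinAt hv hv' hv'_int hv'', ha, hb, sq]

lemma integral_comp_mul_deriv_eq_zero {g : ℝ → ℝ}
    (hv : ∀ x ∈ [[a, b]], HasDerivWithinAt v (v' x) [[a, b]] x)
    (hv' : ContinuousOn v' [[a, b]]) (hg : ContinuousOn g (v '' [[a, b]])) (hab : v a = v b) :
    ∫ x in a..b, g (v x) * v' x = 0 := by
  have hsubst : ∫ x in a..b, (g ∘ v) x * v' x = ∫ y in v a..v b, g y :=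
    integral_comp_mul_deriv'' (fun x hx => (hv x hx).continuousWithinAt)
      (fun x hx => ((hv x (Ioo_subset_Icc_self hx)).hasDerivAt
        (Icc_mem_nhds hx.1 hx.2)).hasDerivWithinAt) hv' hg
  simpa [hab] using hsubst

lemma integral_mul_add_integral_deriv_sq_eq_integral_mul {ν : ℝ} {w f φ : ℝ → ℝ}
    (hw : ContinuousOn w [[a, b]]) (hv'' : ContinuousOn v'' [[a, b]])
    (hφ : ContinuousOn φ (v '' [[a, b]]))
    (hdv : ∀ x ∈ [[a, b]], HasDerivWithinAt v (v' x) [[a, b]] x)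
    (hdv' : ∀ x ∈ [[a, b]], HasDerivWithinAt v' (v'' x) [[a, b]] x)
    (heq : ∀ x ∈ [[a, b]], w x - ν * v'' x + φ (v x) * v' x = f x)
    (ha : v a = 0) (hb : v b = 0) :
    (∫ x in a..b, v x * w x) + ν * ∫ x in a..b, v' x ^ 2 = ∫ x in a..b, f x * v x := by
  have hv : ContinuousOn v [[a, b]] := fun x hx => (hdv x hx).continuousWithinAt
  have hv' : ContinuousOn v' [[a, b]] := fun x hx => (hdv' x hx).continuousWithinAt
  have hφv : ContinuousOn (fun x => φ (v x)) [[a, b]] := hφ.comp hv (mapsTo_image v _)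
  have hadvection : ∫ x in a..b, v x * φ (v x) * v' x = 0 :=
    integral_comp_mul_deriv_eq_zero (g := fun y => y * φ y) hdv hv' (continuousOn_id.mul hφ)
      (ha.trans hb.symm)
  calc (∫ x in a..b, v x * w x) + ν * ∫ x in a..b, v' x ^ 2
      = (∫ x in a..b, v x * w x) - ν * (∫ x in a..b, v x * v'' x)
          + ∫ x in a..b, v x * φ (v x) * v' x := by
        rw [integral_mul_deriv_deriv_eq_neg_integral_deriv_sq hdv hdv' hv''.intervalIntegrable
          ha hb, hadvection]
        ring
    _ = ∫ x in a..b, (v x * w x - ν * (v x * v'' x) + v x * φ (v x) * v' x) := by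
        have hvw : IntervalIntegrable (fun x => v x * w x) volume a b :=
          (hv.mul hw).intervalIntegrable
        have hvv'' : IntervalIntegrable (fun x => ν * (v x * v'' x)) volume a b :=
          ((hv.mul hv'').const_mul ν).intervalIntegrable
        have hφvv' : IntervalIntegrable (fun x => v x * φ (v x) * v' x) volume a b :=
          ((hv.mul hφv).mul hv').intervalIntegrable
        rw [integral_add (hvw.sub hvv'') hφvv', integral_sub hvw hvv'',
          intervalIntegral.integral_const_mul]
    _ = ∫ x in a..b, f x * v x :=
        integral_congr fun x hx => by simp only [← heq x hx]; ring

end Dirichlet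

theorem burgers_energy_identity_general {ν t₀ t₁ a b : ℝ} {φ : ℝ → ℝ} {f u ut ux uxx : ℝ → ℝ → ℝ}
    (hφ : Continuous φ)
    (hu : ContinuousOn u.uncurry ([[t₀, t₁]] ×ˢ [[a, b]]))
    (hut : ContinuousOn ut.uncurry ([[t₀, t₁]] ×ˢ [[a, b]]))
    (hux : ContinuousOn ux.uncurry ([[t₀, t₁]] ×ˢ [[a, b]]))
    (huxx : ContinuousOn uxx.uncurry ([[t₀, t₁]] ×ˢ [[a, b]]))
    (hdt : ∀ t ∈ [[t₀, t₁]], ∀ x ∈ [[a, b]],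
      HasDerivWithinAt (fun s => u s x) (ut t x) [[t₀, t₁]] t)
    (hdx : ∀ t ∈ [[t₀, t₁]], ∀ x ∈ [[a, b]], HasDerivWithinAt (u t) (ux t x) [[a, b]] x)
    (hdxx : ∀ t ∈ [[t₀, t₁]], ∀ x ∈ [[a, b]], HasDerivWithinAt (ux t) (uxx t x) [[a, b]] x)
    (hPDE : ∀ t ∈ [[t₀, t₁]], ∀ x ∈ [[a, b]],
      ut t x - ν * uxx t x + φ (u t x) * ux t x = f t x)
    (hBC : ∀ t ∈ [[t₀, t₁]], u t a = 0 ∧ u t b = 0) :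
    ∀ r ∈ [[t₀, t₁]],
      (∫ x in a..b, u r x ^ 2) + 2 * ν * ∫ s in t₀..r, ∫ x in a..b, ux s x ^ 2
        = (∫ x in a..b, u t₀ x ^ 2) + 2 * ∫ s in t₀..r, ∫ x in a..b, f s x * u s x := by
  intro r hr
  have hsub : [[t₀, r]] ⊆ [[t₀, t₁]] := uIcc_subset_uIcc_left hr
  replace hu := hu.mono (prod_mono_left hsub)
  replace hux := hux.mono (prod_mono_left hsub)
  have hut_r := hut.mono (prod_mono_left hsub)
  have henergy := two_mul_integral_integral_mul_eq_integral_sq_sub hu hut_r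
    fun t ht x hx => (hdt t (hsub ht) x hx).mono hsub
  have hbalance : ∀ s ∈ [[t₀, r]],
      (∫ x in a..b, u s x * ut s x) + ν * (∫ x in a..b, ux s x ^ 2)
        = ∫ x in a..b, f s x * u s x := fun s hs =>
    integral_mul_add_integral_deriv_sq_eq_integral_mul (hut.uncurry_left s (hsub hs))
      (huxx.uncurry_left s (hsub hs)) hφ.continuousOn (hdx s (hsub hs)) (hdxx s (hsub hs))
      (hPDE s (hsub hs)) (hBC s (hsub hs)).1 (hBC s (hsub hs)).2
  have huut_int : IntervalIntegrable (fun s => ∫ x in a..b, u s x * ut s x) volume t₀ r :=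
    intervalIntegrable_intervalIntegral (integrableOn_uIoc_prod_of_continuousOn (hu.mul hut_r))
  have hux_int : IntervalIntegrable (fun s => ∫ x in a..b, ux s x ^ 2) volume t₀ r :=
    intervalIntegrable_intervalIntegral (integrableOn_uIoc_prod_of_continuousOn (hux.pow 2))
  rw [← integral_congr hbalance, integral_add huut_int (hux_int.const_mul ν),
    intervalIntegral.integral_const_mul]
  linarith

/-- Energy identity for classical solutions of the Burgers equation on `[0,T] × [0,π]`
with Dirichlet boundary conditions. -/
theorem burgers_energy_identity
    (ν T : ℝ) (hν : 0 < ν) (hT : 0 < T)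
    (f u ut ux uxx : ℝ → ℝ → ℝ)
    (hf : ContinuousOn (fun p : ℝ × ℝ => f p.1 p.2) (Icc 0 T ×ˢ Icc 0 Real.pi))
    (hu : ContinuousOn (fun p : ℝ × ℝ => u p.1 p.2) (Icc 0 T ×ˢ Icc 0 Real.pi))
    (hut : ContinuousOn (fun p : ℝ × ℝ => ut p.1 p.2) (Icc 0 T ×ˢ Icc 0 Real.pi))
    (hux : ContinuousOn (fun p : ℝ × ℝ => ux p.1 p.2) (Icc 0 T ×ˢ Icc 0 Real.pi))
    (huxx : ContinuousOn (fun p : ℝ × ℝ => uxx p.1 p.2) (Icc 0 T ×ˢ Icc 0 Real.pi))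
    (hdt : ∀ t ∈ Icc (0:ℝ) T, ∀ x ∈ Icc (0:ℝ) Real.pi,
      HasDerivWithinAt (fun s => u s x) (ut t x) (Icc 0 T) t)
    (hdx : ∀ t ∈ Icc (0:ℝ) T, ∀ x ∈ Icc (0:ℝ) Real.pi,
      HasDerivWithinAt (fun y => u t y) (ux t x) (Icc 0 Real.pi) x)
    (hdxx : ∀ t ∈ Icc (0:ℝ) T, ∀ x ∈ Icc (0:ℝ) Real.pi,
      HasDerivWithinAt (fun y => ux t y) (uxx t x) (Icc 0 Real.pi) x)
    (hPDE : ∀ t ∈ Icc (0:ℝ) T, ∀ x ∈ Icc (0:ℝ) Real.pi,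
      ut t x - ν * uxx t x + u t x * ux t x = f t x)
    (hBC : ∀ t ∈ Icc (0:ℝ) T, u t 0 = 0 ∧ u t Real.pi = 0) :
    ∀ r ∈ Icc (0:ℝ) T,
      (∫ x in (0:ℝ)..Real.pi, (u r x) ^ 2)
        + 2 * ν * ∫ s in (0:ℝ)..r, ∫ x in (0:ℝ)..Real.pi, (ux s x) ^ 2
      = (∫ x in (0:ℝ)..Real.pi, (u 0 x) ^ 2)
        + 2 * ∫ s in (0:ℝ)..r, ∫ x in (0:ℝ)..Real.pi, f s x * u s x := by
  simp only [← uIcc_of_le hT.le, ← uIcc_of_le Real.pi_nonneg] at *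
  exact burgers_energy_identity_general continuous_id hu hut hux huxx hdt hdx hdxx hPDE hBC
end

section
/- Let ν > 0, T > 0 and let f : [0,T]×[0,π] → ℝ be continuous. Suppose u : [0,T]×[0,π] → ℝ is continuous, has continuous partial derivatives ∂ₜu, ∂ₓu, ∂ₓ²u, satisfies the Burgers equation ∂ₜu − ν ∂ₓ²u + u ∂ₓu = f on [0,T]×[0,π], and satisfies the Dirichlet boundary conditions u(t,0) = u(t,π) = 0 for all t ∈ [0,T]. Then for every t ∈ [0,T]: ∫₀^π u(t,x)² dx + 2ν ∫₀^t ∫₀^π (∂ₓu(s,x))² dx ds ≤ 2 ∫₀^π u(0,x)² dx + 4 ( ∫₀^t ( ∫₀^π f(s,x)² dx )^{1/2} ds )². -/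
/-!
Energy method. Multiplying the equation by `u` and integrating over `[a, b]`, the boundary
conditions remove the convective term, `∫ u² ∂ₓu = 0`, and turn the viscous one into `-ν ∫ (∂ₓu)²`.
With the energy `E(t) = ∫ u(t, x)² dx`, the dissipation `D(t) = 2ν ∫₀ᵗ ∫ (∂ₓu)²` and the
`L²` norm `N(t)` of `f(t, ·)`, the Cauchy-Schwarz inequality gives
`E(t) + D(t) = E(0) + 2 ∫₀ᵗ ∫ u f ≤ E(0) + 2 ∫₀ᵗ √E N`.

Let `M²` be the maximum of `E` over `[0, t]` and `A = ∫₀ᵗ N`. At a point where `E` is maximal this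
reads `M² ≤ E(0) + 2MA ≤ E(0) + M²/2 + 2A²`, so `M² ≤ 2E(0) + 4A²`; inserting this at `t`,
`E(t) + D(t) ≤ E(0) + M²/2 + 2A² ≤ 2E(0) + 4A²`.
-/

open MeasureTheory Set intervalIntegral

section IntervalIntegral

variable {E : Type*} [NormedAddCommGroup E] [NormedSpace ℝ E] {a b : ℝ}

lemma continuousOn_intervalIntegral_of_continuousOn_prod {X : Type*} [TopologicalSpace X]
    [FirstCountableTopology X] {μ : Measure ℝ} [IsLocallyFiniteMeasure μ] {K : Set X}
    (hK : IsCompact K) {F : X → ℝ → E} (hF : ContinuousOn F.uncurry (K ×ˢ uIcc a b)) :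
    ContinuousOn (fun y => ∫ x in a..b, F y x ∂μ) K := by
  obtain ⟨M, hM⟩ := (hK.prod isCompact_uIcc).exists_bound_of_continuousOn hF
  intro y hy
  refine continuousWithinAt_of_dominated_interval (bound := fun _ => M) ?_ ?_
    intervalIntegrable_const (ae_of_all _ fun x hx =>
      hF.uncurry_right x (uIoc_subset_uIcc hx) y hy)
  · filter_upwards [self_mem_nhdsWithin] with z hz
    exact (hF.uncurry_left z hz).intervalIntegrable.def'.aestronglyMeasurable
  · filter_upwards [self_mem_nhdsWithin] with z hz
    exact ae_of_all _ fun x hx => hM (z, x) ⟨hz, uIoc_subset_uIcc hx⟩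

lemma continuousOn_intervalIntegral_of_continuousOn_prod_Icc {X : Type*} [TopologicalSpace X]
    [FirstCountableTopology X] {μ : Measure ℝ} [IsLocallyFiniteMeasure μ] {K : Set X}
    (hK : IsCompact K) (hab : a ≤ b) {F : X → ℝ → E}
    (hF : ContinuousOn F.uncurry (K ×ˢ Icc a b)) :
    ContinuousOn (fun y => ∫ x in a..b, F y x ∂μ) K :=
  continuousOn_intervalIntegral_of_continuousOn_prod hK (by rwa [uIcc_of_le hab])

lemma intervalIntegral_swap_of_continuousOn {c d : ℝ} {F : ℝ → ℝ → E}
    (hF : ContinuousOn F.uncurry (uIcc c d ×ˢ uIcc a b)) :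
    ∫ s in c..d, ∫ x in a..b, F s x = ∫ x in a..b, ∫ s in c..d, F s x :=
  intervalIntegral_intervalIntegral_swap <|
    (hF.integrableOn_compact (isCompact_uIcc.prod isCompact_uIcc)).mono_set
      (prod_mono uIoc_subset_uIcc uIoc_subset_uIcc)

lemma integral_eq_sub_of_hasDerivWithinAt_uIcc_s1 [CompleteSpace E] {F F' : ℝ → E}
    (hF : ∀ x ∈ uIcc a b, HasDerivWithinAt F (F' x) (uIcc a b) x)
    (hF' : IntervalIntegrable F' volume a b) :
    ∫ x in a..b, F' x = F b - F a :=
  integral_eq_sub_of_hasDeriv_right (fun x hx => (hF x hx).continuousWithinAt)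
    (fun x hx => ((hF x (mem_Icc_of_Ioo hx)).hasDerivAt
      (Icc_mem_nhds hx.1 hx.2)).hasDerivWithinAt) hF'

lemma integral_integral_deriv_eq_sub [CompleteSpace E] {c d : ℝ} {F F' : ℝ → ℝ → E}
    (hF : ContinuousOn F.uncurry (uIcc c d ×ˢ uIcc a b))
    (hF' : ContinuousOn F'.uncurry (uIcc c d ×ˢ uIcc a b))
    (hderiv : ∀ s ∈ uIcc c d, ∀ x ∈ uIcc a b,
      HasDerivWithinAt (fun r => F r x) (F' s x) (uIcc c d) s) :
    ∫ s in c..d, ∫ x in a..b, F' s x = (∫ x in a..b, F d x) - ∫ x in a..b, F c x := by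
  have hslice (x) (hx : x ∈ uIcc a b) : ∫ s in c..d, F' s x = F d x - F c x :=
    integral_eq_sub_of_hasDerivWithinAt_uIcc_s1 (fun s hs => hderiv s hs x hx)
      (hF'.uncurry_right x hx).intervalIntegrable
  rw [intervalIntegral_swap_of_continuousOn hF', integral_congr hslice,
    intervalIntegral.integral_sub (hF.uncurry_left d right_mem_uIcc).intervalIntegrable
      (hF.uncurry_left c left_mem_uIcc).intervalIntegrable]

end IntervalIntegral

section BoundaryValues

variable {a b : ℝ} {v v' v'' : ℝ → ℝ}

lemma integral_pow_mul_deriv_eq_zero (n : ℕ)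
    (hv : ∀ x ∈ uIcc a b, HasDerivWithinAt v (v' x) (uIcc a b) x)
    (hv' : IntervalIntegrable v' volume a b) (hab : v a = v b) :
    ∫ x in a..b, v x ^ n * v' x = 0 := by
  have hprim (x) (hx : x ∈ uIcc a b) :
      HasDerivWithinAt (fun y => v y ^ (n + 1) / (n + 1)) (v x ^ n * v' x) (uIcc a b) x := by
    refine (((hv x hx).fun_pow (n + 1)).div_const _).congr_deriv ?_
    push_cast
    field_simp
  have hcont : ContinuousOn (fun x => v x ^ n) (uIcc a b) :=
    fun x hx => (hv x hx).continuousWithinAt.pow n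
  rw [integral_eq_sub_of_hasDerivWithinAt_uIcc_s1 hprim (hv'.continuousOn_mul hcont), hab, sub_self]

lemma integral_mul_deriv_deriv_eq_neg
    (hv : ∀ x ∈ uIcc a b, HasDerivWithinAt v (v' x) (uIcc a b) x)
    (hv' : ∀ x ∈ uIcc a b, HasDerivWithinAt v' (v'' x) (uIcc a b) x)
    (hv'' : IntervalIntegrable v'' volume a b) (ha : v a = 0) (hb : v b = 0) :
    ∫ x in a..b, v x * v'' x = -∫ x in a..b, v' x ^ 2 := by
  have hcont : ContinuousOn v' (uIcc a b) := fun x hx => (hv' x hx).continuousWithinAt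
  rw [integral_mul_deriv_eq_deriv_mul_of_hasDerivWithinAt hv hv' hcont.intervalIntegrable hv'',
    ha, hb]
  simp only [zero_mul, sub_zero, zero_sub, sq]

end BoundaryValues

section Inequalities

lemma integral_mul_le_sqrt_mul_sqrt {α : Type*} [MeasurableSpace α] {μ : Measure α} {v w : α → ℝ}
    (hv : MemLp v 2 μ) (hw : MemLp w 2 μ) :
    ∫ x, v x * w x ∂μ ≤ √(∫ x, v x ^ 2 ∂μ) * √(∫ x, w x ^ 2 ∂μ) := by
  have hnorm : ∫ x, v x * w x ∂μ ≤ ∫ x, ‖v x‖ * ‖w x‖ ∂μ :=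
    integral_mono (hv.integrable_mul hw) (hv.norm.integrable_mul hw.norm) fun x =>
      (le_abs_self _).trans_eq (abs_mul _ _)
  have hHolder := integral_mul_norm_le_Lp_mul_Lq Real.HolderConjugate.two_two
    (by simpa using hv) (by simpa using hw)
  simpa [Real.sqrt_eq_rpow] using hnorm.trans hHolder

lemma intervalIntegral_mul_le_sqrt_mul_sqrt {a b : ℝ} (hab : a ≤ b) {v w : ℝ → ℝ}
    (hv : ContinuousOn v (Icc a b)) (hw : ContinuousOn w (Icc a b)) :
    ∫ x in a..b, v x * w x ≤ √(∫ x in a..b, v x ^ 2) * √(∫ x in a..b, w x ^ 2) := by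
  have hmemLp {z : ℝ → ℝ} (hz : ContinuousOn z (Icc a b)) :
      MemLp z 2 (volume.restrict (Ioc a b)) :=
    (memLp_two_iff_integrable_sq (hz.intervalIntegrable_of_Icc hab).1.aestronglyMeasurable).2
      ((hz.pow 2).intervalIntegrable_of_Icc hab).1
  simpa only [integral_of_le hab] using integral_mul_le_sqrt_mul_sqrt (hmemLp hv) (hmemLp hw)

lemma integral_mul_le_mul_integral_of_le {a b r M : ℝ} {g N : ℝ → ℝ} (hr : r ∈ Icc a b)
    (hg : ContinuousOn g (Icc a b)) (hgM : ∀ s ∈ Icc a b, g s ≤ M) (hM : 0 ≤ M)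
    (hN : IntervalIntegrable N volume a b) (hN0 : ∀ s ∈ Icc a b, 0 ≤ N s) :
    ∫ s in a..r, g s * N s ≤ M * ∫ s in a..b, N s := by
  have hab : a ≤ b := hr.1.trans hr.2
  have hsub : Icc a r ⊆ Icc a b := Icc_subset_Icc_right hr.2
  have hNr : IntervalIntegrable N volume a r :=
    hN.mono_set (by rwa [uIcc_of_le hr.1, uIcc_of_le hab])
  calc ∫ s in a..r, g s * N s
      ≤ ∫ s in a..r, M * N s :=
        integral_mono_on hr.1
          (hNr.continuousOn_mul (by rw [uIcc_of_le hr.1]; exact hg.mono hsub)) (hNr.const_mul M)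
          fun s hs => mul_le_mul_of_nonneg_right (hgM s (hsub hs)) (hN0 s (hsub hs))
    _ = M * ∫ s in a..r, N s := intervalIntegral.integral_const_mul _ _
    _ ≤ M * ∫ s in a..b, N s := by
        refine mul_le_mul_of_nonneg_left (integral_mono_interval le_rfl hr.1 hr.2 ?_ hN) hM
        exact (ae_restrict_iff' measurableSet_Ioc).2
          (ae_of_all _ fun s hs => hN0 s (Ioc_subset_Icc_self hs))

lemma add_le_of_add_le_integral_sqrt_mul {a b C : ℝ} (hab : a ≤ b) {E D N : ℝ → ℝ}
    (hE : ContinuousOn E (Icc a b)) (hE0 : ∀ r ∈ Icc a b, 0 ≤ E r)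
    (hD0 : ∀ r ∈ Icc a b, 0 ≤ D r)
    (hN : IntervalIntegrable N volume a b) (hN0 : ∀ r ∈ Icc a b, 0 ≤ N r)
    (h : ∀ r ∈ Icc a b, E r + D r ≤ C + 2 * ∫ s in a..r, √(E s) * N s) :
    E b + D b ≤ 2 * C + 4 * (∫ s in a..b, N s) ^ 2 := by
  obtain ⟨m, hm, hmax⟩ := isCompact_Icc.exists_isMaxOn (nonempty_Icc.2 hab) hE
  set M := √(E m)
  set A := ∫ s in a..b, N s
  have hbound (r) (hr : r ∈ Icc a b) : E r + D r ≤ C + 2 * (M * A) := by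
    have := integral_mul_le_mul_integral_of_le hr hE.sqrt (fun s hs => Real.sqrt_le_sqrt (hmax hs))
      (Real.sqrt_nonneg _) hN hN0
    linarith [h r hr]
  have hMA : 2 * (M * A) ≤ M ^ 2 / 2 + 2 * A ^ 2 := by linarith [sq_nonneg (M - 2 * A)]
  have hM : M ^ 2 ≤ 2 * C + 4 * A ^ 2 := by
    have hsq : M ^ 2 = E m := Real.sq_sqrt (hE0 m hm)
    linarith [hbound m hm, hD0 m hm]
  linarith [hbound b (right_mem_Icc.2 hab)]

end Inequalities

/-- Classical solutions `u` on `[0, T] × [a, b]` of the Burgers equation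
`∂ₜu - ν ∂ₓ²u + u ∂ₓu = f` with zero boundary values. The functions `ut`, `ux`, `uxx` are the
partial derivatives of `u`, one-sided on the boundary of the rectangle. -/
structure IsBurgersSolution (ν T a b : ℝ) (f u ut ux uxx : ℝ → ℝ → ℝ) : Prop where
  continuousOn : ContinuousOn u.uncurry (Icc 0 T ×ˢ Icc a b)
  continuousOn_dt : ContinuousOn ut.uncurry (Icc 0 T ×ˢ Icc a b)
  continuousOn_dx : ContinuousOn ux.uncurry (Icc 0 T ×ˢ Icc a b)
  continuousOn_dxx : ContinuousOn uxx.uncurry (Icc 0 T ×ˢ Icc a b)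
  hasDerivWithinAt_dt : ∀ t ∈ Icc 0 T, ∀ x ∈ Icc a b,
    HasDerivWithinAt (fun s => u s x) (ut t x) (Icc 0 T) t
  hasDerivWithinAt_dx : ∀ t ∈ Icc 0 T, ∀ x ∈ Icc a b,
    HasDerivWithinAt (u t) (ux t x) (Icc a b) x
  hasDerivWithinAt_dxx : ∀ t ∈ Icc 0 T, ∀ x ∈ Icc a b,
    HasDerivWithinAt (ux t) (uxx t x) (Icc a b) x
  equation : ∀ t ∈ Icc 0 T, ∀ x ∈ Icc a b, ut t x - ν * uxx t x + u t x * ux t x = f t x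
  left_eq_zero : ∀ t ∈ Icc 0 T, u t a = 0
  right_eq_zero : ∀ t ∈ Icc 0 T, u t b = 0

namespace IsBurgersSolution

variable {ν T a b t : ℝ} {f u ut ux uxx : ℝ → ℝ → ℝ}

lemma continuousOn_force (h : IsBurgersSolution ν T a b f u ut ux uxx) :
    ContinuousOn f.uncurry (Icc 0 T ×ˢ Icc a b) :=
  ((h.continuousOn_dt.sub (h.continuousOn_dxx.const_mul ν)).add
    (h.continuousOn.mul h.continuousOn_dx)).congr fun p hp => (h.equation p.1 hp.1 p.2 hp.2).symm

lemma mono (h : IsBurgersSolution ν T a b f u ut ux uxx) (ht : t ≤ T) :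
    IsBurgersSolution ν t a b f u ut ux uxx := by
  have hsub : Icc 0 t ⊆ Icc 0 T := Icc_subset_Icc_right ht
  have hprod : Icc 0 t ×ˢ Icc a b ⊆ Icc 0 T ×ˢ Icc a b := prod_mono_left hsub
  exact
    { continuousOn := h.continuousOn.mono hprod
      continuousOn_dt := h.continuousOn_dt.mono hprod
      continuousOn_dx := h.continuousOn_dx.mono hprod
      continuousOn_dxx := h.continuousOn_dxx.mono hprod
      hasDerivWithinAt_dt := fun s hs x hx => (h.hasDerivWithinAt_dt s (hsub hs) x hx).mono hsub
      hasDerivWithinAt_dx := fun s hs => h.hasDerivWithinAt_dx s (hsub hs)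
      hasDerivWithinAt_dxx := fun s hs => h.hasDerivWithinAt_dxx s (hsub hs)
      equation := fun s hs => h.equation s (hsub hs)
      left_eq_zero := fun s hs => h.left_eq_zero s (hsub hs)
      right_eq_zero := fun s hs => h.right_eq_zero s (hsub hs) }

lemma integral_mul_dt (h : IsBurgersSolution ν T a b f u ut ux uxx) (hab : a ≤ b)
    (ht : t ∈ Icc 0 T) :
    ∫ x in a..b, u t x * ut t x
      = (∫ x in a..b, u t x * f t x) - ν * ∫ x in a..b, ux t x ^ 2 := by
  have hu := h.continuousOn.uncurry_left t ht
  have hux := h.continuousOn_dx.uncurry_left t ht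
  have huxx := h.continuousOn_dxx.uncurry_left t ht
  have hf := h.continuousOn_force.uncurry_left t ht
  have hdx := h.hasDerivWithinAt_dx t ht
  have hdxx := h.hasDerivWithinAt_dxx t ht
  have hPDE := h.equation t ht
  simp only [← uIcc_of_le hab] at hu hux huxx hf hdx hdxx hPDE
  have hforce : IntervalIntegrable (fun x => u t x * f t x) volume a b :=
    (hu.mul hf).intervalIntegrable
  have hviscous : IntervalIntegrable (fun x => ν * (u t x * uxx t x)) volume a b :=
    ((hu.mul huxx).const_mul ν).intervalIntegrable
  have hconvective : IntervalIntegrable (fun x => u t x ^ 2 * ux t x) volume a b :=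
    ((hu.pow 2).mul hux).intervalIntegrable
  calc ∫ x in a..b, u t x * ut t x
      = ∫ x in a..b, (u t x * f t x + ν * (u t x * uxx t x) - u t x ^ 2 * ux t x) :=
        integral_congr fun x hx => by linear_combination u t x * hPDE x hx
    _ = (∫ x in a..b, u t x * f t x) + ν * (∫ x in a..b, u t x * uxx t x)
        - ∫ x in a..b, u t x ^ 2 * ux t x := by
        rw [intervalIntegral.integral_sub (hforce.add hviscous) hconvective,
          intervalIntegral.integral_add hforce hviscous, intervalIntegral.integral_const_mul]
    _ = (∫ x in a..b, u t x * f t x) - ν * ∫ x in a..b, ux t x ^ 2 := by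
        rw [integral_mul_deriv_deriv_eq_neg hdx hdxx huxx.intervalIntegrable
            (h.left_eq_zero t ht) (h.right_eq_zero t ht),
          integral_pow_mul_deriv_eq_zero 2 hdx hux.intervalIntegrable
            ((h.left_eq_zero t ht).trans (h.right_eq_zero t ht).symm)]
        ring

lemma continuousOn_energy (h : IsBurgersSolution ν T a b f u ut ux uxx) (hab : a ≤ b) :
    ContinuousOn (fun s => ∫ x in a..b, u s x ^ 2) (Icc 0 T) :=
  continuousOn_intervalIntegral_of_continuousOn_prod_Icc isCompact_Icc hab (h.continuousOn.pow 2)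

lemma continuousOn_dissipation (h : IsBurgersSolution ν T a b f u ut ux uxx) (hab : a ≤ b) :
    ContinuousOn (fun s => ∫ x in a..b, ux s x ^ 2) (Icc 0 T) :=
  continuousOn_intervalIntegral_of_continuousOn_prod_Icc isCompact_Icc hab
    (h.continuousOn_dx.pow 2)

lemma continuousOn_power (h : IsBurgersSolution ν T a b f u ut ux uxx) (hab : a ≤ b) :
    ContinuousOn (fun s => ∫ x in a..b, u s x * f s x) (Icc 0 T) :=
  continuousOn_intervalIntegral_of_continuousOn_prod_Icc isCompact_Icc hab
    (h.continuousOn.mul h.continuousOn_force)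

lemma continuousOn_sqrt_integral_force_sq (h : IsBurgersSolution ν T a b f u ut ux uxx)
    (hab : a ≤ b) :
    ContinuousOn (fun s => √(∫ x in a..b, f s x ^ 2)) (Icc 0 T) :=
  (continuousOn_intervalIntegral_of_continuousOn_prod_Icc isCompact_Icc hab
    (h.continuousOn_force.pow 2)).sqrt

lemma energy_add_dissipation_eq (h : IsBurgersSolution ν T a b f u ut ux uxx) (hT : 0 ≤ T)
    (hab : a ≤ b) :
    (∫ x in a..b, u T x ^ 2) + 2 * ν * ∫ s in 0..T, ∫ x in a..b, ux s x ^ 2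
      = (∫ x in a..b, u 0 x ^ 2) + 2 * ∫ s in 0..T, ∫ x in a..b, u s x * f s x := by
  have hpower := (h.continuousOn_power hab).intervalIntegrable_of_Icc (μ := volume) hT
  have hdissipation := (h.continuousOn_dissipation hab).intervalIntegrable_of_Icc (μ := volume) hT
  have hgrowth : ∫ s in 0..T, ∫ x in a..b, 2 * (u s x * ut s x)
      = (∫ x in a..b, u T x ^ 2) - ∫ x in a..b, u 0 x ^ 2 := by
    apply integral_integral_deriv_eq_sub (F := fun s x => u s x ^ 2) <;>
      rw [uIcc_of_le hT, uIcc_of_le hab]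
    · exact h.continuousOn.pow 2
    · exact (h.continuousOn.mul h.continuousOn_dt).const_mul 2
    · exact fun s hs x hx => ((h.hasDerivWithinAt_dt s hs x hx).fun_pow 2).congr_deriv (by ring)
  have hbalance : ∫ s in 0..T, ∫ x in a..b, 2 * (u s x * ut s x)
      = ∫ s in 0..T, (2 * (∫ x in a..b, u s x * f s x) - 2 * ν * ∫ x in a..b, ux s x ^ 2) := by
    refine integral_congr fun s hs => ?_
    rw [uIcc_of_le hT] at hs
    simp only [intervalIntegral.integral_const_mul, h.integral_mul_dt hab hs]
    ring
  rw [intervalIntegral.integral_sub (hpower.const_mul 2) (hdissipation.const_mul (2 * ν)),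
    intervalIntegral.integral_const_mul, intervalIntegral.integral_const_mul] at hbalance
  linarith

lemma energy_add_dissipation_le (h : IsBurgersSolution ν T a b f u ut ux uxx) (hT : 0 ≤ T)
    (hab : a ≤ b) :
    (∫ x in a..b, u T x ^ 2) + 2 * ν * ∫ s in 0..T, ∫ x in a..b, ux s x ^ 2
      ≤ (∫ x in a..b, u 0 x ^ 2)
        + 2 * ∫ s in 0..T, √(∫ x in a..b, u s x ^ 2) * √(∫ x in a..b, f s x ^ 2) := by
  rw [h.energy_add_dissipation_eq hT hab]
  gcongr
  exact integral_mono_on hT ((h.continuousOn_power hab).intervalIntegrable_of_Icc hT)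
    (((h.continuousOn_energy hab).sqrt.mul
      (h.continuousOn_sqrt_integral_force_sq hab)).intervalIntegrable_of_Icc hT)
    fun s hs => intervalIntegral_mul_le_sqrt_mul_sqrt hab (h.continuousOn.uncurry_left s hs)
      (h.continuousOn_force.uncurry_left s hs)

end IsBurgersSolution

theorem burgers_apriori_estimate_general {ν T a b : ℝ} (hν : 0 ≤ ν) (hab : a ≤ b)
    {f u ut ux uxx : ℝ → ℝ → ℝ} (h : IsBurgersSolution ν T a b f u ut ux uxx) {t : ℝ}
    (ht : t ∈ Icc 0 T) :
    (∫ x in a..b, u t x ^ 2) + 2 * ν * ∫ s in 0..t, ∫ x in a..b, ux s x ^ 2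
      ≤ 2 * (∫ x in a..b, u 0 x ^ 2) + 4 * (∫ s in 0..t, √(∫ x in a..b, f s x ^ 2)) ^ 2 := by
  have hsol : IsBurgersSolution ν t a b f u ut ux uxx := h.mono ht.2
  have hsq (g : ℝ → ℝ) : 0 ≤ ∫ x in a..b, g x ^ 2 := integral_nonneg hab fun _ _ => sq_nonneg _
  have hdissipation (r) (hr : r ∈ Icc 0 t) : 0 ≤ 2 * ν * ∫ s in 0..r, ∫ x in a..b, ux s x ^ 2 :=
    mul_nonneg (by positivity) (integral_nonneg hr.1 fun s _ => hsq (ux s))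
  exact add_le_of_add_le_integral_sqrt_mul ht.1 (hsol.continuousOn_energy hab)
    (fun s _ => hsq (u s)) hdissipation
    ((hsol.continuousOn_sqrt_integral_force_sq hab).intervalIntegrable_of_Icc ht.1)
    (fun _ _ => Real.sqrt_nonneg _)
    (fun r hr => (hsol.mono hr.2).energy_add_dissipation_le hr.1 hab)

/-- A priori estimate for classical solutions of the Burgers equation on `[0,T] × [0,π]`
with Dirichlet boundary conditions. -/
theorem burgers_apriori_estimate
    (ν T : ℝ) (hν : 0 < ν) (hT : 0 < T)
    (f u ut ux uxx : ℝ → ℝ → ℝ)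
    (hf : ContinuousOn (fun p : ℝ × ℝ => f p.1 p.2) (Icc 0 T ×ˢ Icc 0 Real.pi))
    (hu : ContinuousOn (fun p : ℝ × ℝ => u p.1 p.2) (Icc 0 T ×ˢ Icc 0 Real.pi))
    (hut : ContinuousOn (fun p : ℝ × ℝ => ut p.1 p.2) (Icc 0 T ×ˢ Icc 0 Real.pi))
    (hux : ContinuousOn (fun p : ℝ × ℝ => ux p.1 p.2) (Icc 0 T ×ˢ Icc 0 Real.pi))
    (huxx : ContinuousOn (fun p : ℝ × ℝ => uxx p.1 p.2) (Icc 0 T ×ˢ Icc 0 Real.pi))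
    (hdt : ∀ t ∈ Icc (0:ℝ) T, ∀ x ∈ Icc (0:ℝ) Real.pi,
      HasDerivWithinAt (fun s => u s x) (ut t x) (Icc 0 T) t)
    (hdx : ∀ t ∈ Icc (0:ℝ) T, ∀ x ∈ Icc (0:ℝ) Real.pi,
      HasDerivWithinAt (fun y => u t y) (ux t x) (Icc 0 Real.pi) x)
    (hdxx : ∀ t ∈ Icc (0:ℝ) T, ∀ x ∈ Icc (0:ℝ) Real.pi,
      HasDerivWithinAt (fun y => ux t y) (uxx t x) (Icc 0 Real.pi) x)
    (hPDE : ∀ t ∈ Icc (0:ℝ) T, ∀ x ∈ Icc (0:ℝ) Real.pi,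
      ut t x - ν * uxx t x + u t x * ux t x = f t x)
    (hBC : ∀ t ∈ Icc (0:ℝ) T, u t 0 = 0 ∧ u t Real.pi = 0) :
    ∀ t ∈ Icc (0:ℝ) T,
      (∫ x in (0:ℝ)..Real.pi, (u t x) ^ 2)
        + 2 * ν * ∫ s in (0:ℝ)..t, ∫ x in (0:ℝ)..Real.pi, (ux s x) ^ 2
      ≤ 2 * (∫ x in (0:ℝ)..Real.pi, (u 0 x) ^ 2)
        + 4 * (∫ s in (0:ℝ)..t, Real.sqrt (∫ x in (0:ℝ)..Real.pi, (f s x) ^ 2)) ^ 2 :=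
  fun _ ht => burgers_apriori_estimate_general hν.le Real.pi_pos.le
    ⟨hu, hut, hux, huxx, hdt, hdx, hdxx, hPDE, fun t ht => (hBC t ht).1, fun t ht => (hBC t ht).2⟩
    ht
end

section
/- Let ν > 0, T > 0 and let f : [0,T]×[0,π] → ℝ be continuous. Suppose u₁ and u₂ are two functions from [0,T]×[0,π] to ℝ, each continuous with continuous partial derivatives ∂ₜuᵢ, ∂ₓuᵢ, ∂ₓ²uᵢ, each satisfying the Burgers equation ∂ₜuᵢ − ν ∂ₓ²uᵢ + uᵢ ∂ₓuᵢ = f on [0,T]×[0,π] and the Dirichlet boundary conditions uᵢ(t,0) = uᵢ(t,π) = 0 for all t ∈ [0,T]. If u₁(0,x) = u₂(0,x) for all x ∈ [0,π], then u₁ = u₂ on [0,T]×[0,π]. -/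
/-!
The difference `w = u₁ - u₂` of two solutions satisfies the linear parabolic equation
`wₜ = ν wₓₓ - u₁ wₓ - (∂ₓu₂) w`, and `-∂ₓu₂` is bounded above by some `M`. If `w` were positive
somewhere, then `z = exp (-(M + 1) t) w` would attain a positive maximum, and, since `w` vanishes
initially and laterally, it would do so at a point with `t > 0` and `x` interior. There `wₓ = 0`,
`wₓₓ ≤ 0` and `zₜ ≥ 0`, so `(M + 1) w ≤ wₜ ≤ M w`, which is absurd for `w > 0`. The same applies to
`-w`, which solves the same equation.
-/

open MeasureTheory Set intervalIntegral

section ExtremumTests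

open Filter Topology

variable {f : ℝ → ℝ} {f' f'' x : ℝ}

lemma leftDeriv_nonneg_of_isLocalMaxOn_Iic (hmax : IsLocalMaxOn f (Iic x) x)
    (hf : HasDerivWithinAt f f' (Iic x) x) : 0 ≤ f' := by
  have hslope : Tendsto (slope f x) (𝓝[<] x) (𝓝 f') :=
    (hasDerivWithinAt_iff_tendsto_slope' self_notMem_Iio).1 hf.Iio_of_Iic
  refine ge_of_tendsto hslope ?_
  filter_upwards [hmax.filter_mono (nhdsWithin_mono x Iio_subset_Iic_self), self_mem_nhdsWithin]
    with y hy hyx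
  rw [slope_def_field]
  exact div_nonneg_of_nonpos (sub_nonpos.2 hy) (sub_nonpos.2 (le_of_lt hyx))

lemma deriv_deriv_nonpos_of_isLocalMax (hmax : IsLocalMax f x) (hf : ContinuousAt f x) :
    deriv (deriv f) x ≤ 0 := by
  by_contra! hpos
  have hmin : IsLocalMin f x := isLocalMin_of_deriv_deriv_pos hpos hmax.deriv_eq_zero hf
  have hconst : f =ᶠ[𝓝 x] fun _ ↦ f x := by
    filter_upwards [hmax, hmin] with y hle hge using le_antisymm hle hge
  have hzero : deriv (deriv f) x = 0 := by simp [hconst.deriv.deriv_eq]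
  exact hpos.ne' hzero

lemma second_deriv_nonpos_of_isLocalMax {g : ℝ → ℝ} (hmax : IsLocalMax f x)
    (hf : ∀ᶠ y in 𝓝 x, HasDerivAt f (g y) y) (hg : HasDerivAt g f'' x) : f'' ≤ 0 := by
  have hderiv : deriv f =ᶠ[𝓝 x] g := hf.mono fun _ hy ↦ hy.deriv
  rw [← hg.deriv, ← hderiv.deriv_eq]
  exact deriv_deriv_nonpos_of_isLocalMax hmax hf.self_of_nhds.continuousAt

end ExtremumTests

/-- The points of the cylinder `[0, T] × [a, b]` at which a parabolic equation is imposed; these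
include the final time `T`. -/
def parabolicInterior (T a b : ℝ) : Set (ℝ × ℝ) :=
  Ioc 0 T ×ˢ Ioo a b

/-- The part of the cylinder `[0, T] × [a, b]` on which initial and lateral boundary data are
prescribed: its bottom and its two sides, but not its top. -/
def parabolicBoundary (T a b : ℝ) : Set (ℝ × ℝ) :=
  (Icc 0 T ×ˢ Icc a b) \ parabolicInterior T a b

lemma parabolicInterior_subset_Icc_prod_Icc {T a b : ℝ} :
    parabolicInterior T a b ⊆ Icc 0 T ×ˢ Icc a b :=
  prod_mono Ioc_subset_Icc_self Ioo_subset_Icc_self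

lemma bddBelow_image_parabolicInterior {T a b : ℝ} {f : ℝ × ℝ → ℝ}
    (hf : ContinuousOn f (Icc 0 T ×ˢ Icc a b)) : BddBelow (f '' parabolicInterior T a b) :=
  ((isCompact_Icc.prod isCompact_Icc).bddBelow_image hf).mono
    (image_mono parabolicInterior_subset_Icc_prod_Icc)

/-- On `s`, the functions `ut`, `ux`, `uxx` are the partial derivatives `∂ₜu`, `∂ₓu`, `∂ₓ²u` of
`u t x`. Time derivatives are taken from the left, so that `s` may contain points at the final
time. -/
structure HasParabolicDerivsOn (u ut ux uxx : ℝ → ℝ → ℝ) (s : Set (ℝ × ℝ)) : Prop where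
  time : ∀ ⦃t x⦄, (t, x) ∈ s → HasDerivWithinAt (fun τ ↦ u τ x) (ut t x) (Iic t) t
  space : ∀ ⦃t x⦄, (t, x) ∈ s → HasDerivAt (u t) (ux t x) x
  space_space : ∀ ⦃t x⦄, (t, x) ∈ s → HasDerivAt (ux t) (uxx t x) x

namespace HasParabolicDerivsOn

variable {u ut ux uxx v vt vx vxx : ℝ → ℝ → ℝ} {s : Set (ℝ × ℝ)} {T a b t x : ℝ}

lemma neg (hu : HasParabolicDerivsOn u ut ux uxx s) :
    HasParabolicDerivsOn (-u) (-ut) (-ux) (-uxx) s where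
  time _ _ h := (hu.time h).neg
  space _ _ h := (hu.space h).neg
  space_space _ _ h := (hu.space_space h).neg

lemma sub (hu : HasParabolicDerivsOn u ut ux uxx s) (hv : HasParabolicDerivsOn v vt vx vxx s) :
    HasParabolicDerivsOn (u - v) (ut - vt) (ux - vx) (uxx - vxx) s where
  time _ _ h := (hu.time h).sub (hv.time h)
  space _ _ h := (hu.space h).sub (hv.space h)
  space_space _ _ h := (hu.space_space h).sub (hv.space_space h)

lemma time_mul {φ φ' : ℝ → ℝ} (hφ : ∀ t, HasDerivAt φ (φ' t) t)
    (hu : HasParabolicDerivsOn u ut ux uxx s) :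
    HasParabolicDerivsOn (fun t x ↦ φ t * u t x) (fun t x ↦ φ' t * u t x + φ t * ut t x)
      (fun t x ↦ φ t * ux t x) (fun t x ↦ φ t * uxx t x) s where
  time t _ h := (hφ t).hasDerivWithinAt.mul (hu.time h)
  space t _ h := (hu.space h).const_mul (φ t)
  space_space t _ h := (hu.space_space h).const_mul (φ t)

lemma of_hasDerivWithinAt_Icc
    (ht : ∀ t ∈ Icc 0 T, ∀ x ∈ Icc a b, HasDerivWithinAt (fun τ ↦ u τ x) (ut t x) (Icc 0 T) t)
    (hx : ∀ t ∈ Icc 0 T, ∀ x ∈ Icc a b, HasDerivWithinAt (u t) (ux t x) (Icc a b) x)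
    (hxx : ∀ t ∈ Icc 0 T, ∀ x ∈ Icc a b, HasDerivWithinAt (ux t) (uxx t x) (Icc a b) x) :
    HasParabolicDerivsOn u ut ux uxx (parabolicInterior T a b) where
  time t x h := (ht t (Ioc_subset_Icc_self h.1) x (Ioo_subset_Icc_self h.2)).mono_of_mem_nhdsWithin
    (Filter.mem_of_superset (Icc_mem_nhdsLE h.1.1) (Icc_subset_Icc_right h.1.2))
  space t x h := (hx t (Ioc_subset_Icc_self h.1) x (Ioo_subset_Icc_self h.2)).hasDerivAt
    (Icc_mem_nhds h.2.1 h.2.2)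
  space_space t x h := (hxx t (Ioc_subset_Icc_self h.1) x (Ioo_subset_Icc_self h.2)).hasDerivAt
    (Icc_mem_nhds h.2.1 h.2.2)

lemma derivs_of_isMaxOn (hu : HasParabolicDerivsOn u ut ux uxx (parabolicInterior T a b))
    (hmem : (t, x) ∈ parabolicInterior T a b)
    (hmax : IsMaxOn (Function.uncurry u) (parabolicInterior T a b) (t, x)) :
    0 ≤ ut t x ∧ ux t x = 0 ∧ uxx t x ≤ 0 := by
  have htime : IsLocalMaxOn (fun τ ↦ u τ x) (Iic t) t := by
    filter_upwards [Ioc_mem_nhdsLE hmem.1.1] with τ hτ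
    exact hmax (show (τ, x) ∈ parabolicInterior T a b from
      ⟨⟨hτ.1, hτ.2.trans hmem.1.2⟩, hmem.2⟩)
  have hnhds : Ioo a b ∈ nhds x := Ioo_mem_nhds hmem.2.1 hmem.2.2
  have hspace : IsLocalMax (u t) x := by
    filter_upwards [hnhds] with y hy
    exact hmax (show (t, y) ∈ parabolicInterior T a b from ⟨hmem.1, hy⟩)
  refine ⟨leftDeriv_nonneg_of_isLocalMaxOn_Iic htime (hu.time hmem),
    hspace.hasDerivAt_eq_zero (hu.space hmem),
    second_deriv_nonpos_of_isLocalMax hspace ?_ (hu.space_space hmem)⟩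
  filter_upwards [hnhds] with y hy using hu.space ⟨hmem.1, hy⟩

end HasParabolicDerivsOn

section MaximumPrinciple

variable {T a b : ℝ} {u ut ux uxx κ β γ : ℝ → ℝ → ℝ}

lemma exists_isMaxOn_mem_parabolicInterior {f : ℝ × ℝ → ℝ} {p : ℝ × ℝ}
    (hf : ContinuousOn f (Icc 0 T ×ˢ Icc a b)) (hbdry : ∀ q ∈ parabolicBoundary T a b, f q ≤ 0)
    (hp : p ∈ Icc 0 T ×ˢ Icc a b) (hpos : 0 < f p) :
    ∃ q ∈ parabolicInterior T a b, 0 < f q ∧ IsMaxOn f (parabolicInterior T a b) q := by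
  obtain ⟨q, hq, hmax⟩ := (isCompact_Icc.prod isCompact_Icc).exists_isMaxOn ⟨p, hp⟩ hf
  have hqpos : 0 < f q := hpos.trans_le (hmax hp)
  have hqint : q ∈ parabolicInterior T a b := by
    by_contra hnot
    exact hqpos.not_ge (hbdry q ⟨hq, hnot⟩)
  exact ⟨q, hqint, hqpos, hmax.on_subset parabolicInterior_subset_Icc_prod_Icc⟩

theorem nonpos_of_parabolic_subsolution
    (hcont : ContinuousOn (Function.uncurry u) (Icc 0 T ×ˢ Icc a b))
    (hu : HasParabolicDerivsOn u ut ux uxx (parabolicInterior T a b))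
    (hκ : ∀ t x, (t, x) ∈ parabolicInterior T a b → 0 ≤ κ t x)
    (hγ : BddAbove (Function.uncurry γ '' parabolicInterior T a b))
    (hsub : ∀ t x, (t, x) ∈ parabolicInterior T a b →
      ut t x ≤ κ t x * uxx t x + β t x * ux t x + γ t x * u t x)
    (hbdry : ∀ p ∈ parabolicBoundary T a b, Function.uncurry u p ≤ 0) :
    ∀ p ∈ Icc 0 T ×ˢ Icc a b, Function.uncurry u p ≤ 0 := by
  intro p hp
  by_contra! hpos
  obtain ⟨M, hM⟩ := hγ
  let φ : ℝ → ℝ := fun t ↦ Real.exp (-(M + 1) * t)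
  have hφpos (t : ℝ) : 0 < φ t := Real.exp_pos _
  have hφ (t : ℝ) : HasDerivAt φ (φ t * -(M + 1)) t := (hasDerivAt_const_mul _).exp
  have hφcont : Continuous φ := by fun_prop
  obtain ⟨⟨t, x⟩, hmem, hzpos, hmax⟩ := exists_isMaxOn_mem_parabolicInterior
    (f := Function.uncurry fun t x ↦ φ t * u t x)
    ((hφcont.comp continuous_fst).continuousOn.mul hcont)
    (fun q hq ↦ mul_nonpos_of_nonneg_of_nonpos (hφpos q.1).le (hbdry q hq))
    hp (mul_pos (hφpos p.1) hpos)
  obtain ⟨hzt, hzx, hzxx⟩ := (hu.time_mul hφ).derivs_of_isMaxOn hmem hmax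
  have hu_pos : 0 < u t x := pos_of_mul_pos_right hzpos (hφpos t).le
  have hux : ux t x = 0 := (mul_eq_zero_iff_left (hφpos t).ne').1 hzx
  have huxx : uxx t x ≤ 0 := nonpos_of_mul_nonpos_right hzxx (hφpos t)
  have hlower : (M + 1) * u t x ≤ ut t x := by
    refine sub_nonneg.1 (nonneg_of_mul_nonneg_right (a := φ t) ?_ (hφpos t))
    linear_combination hzt
  have hupper : ut t x ≤ M * u t x := calc
    ut t x ≤ κ t x * uxx t x + β t x * ux t x + γ t x * u t x := hsub t x hmem
    _ = κ t x * uxx t x + γ t x * u t x := by rw [hux, mul_zero, add_zero]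
    _ ≤ 0 + M * u t x := add_le_add (mul_nonpos_of_nonneg_of_nonpos (hκ t x hmem) huxx)
      (mul_le_mul_of_nonneg_right (hM (mem_image_of_mem _ hmem)) hu_pos.le)
    _ = M * u t x := zero_add _
  linarith

theorem eq_zero_of_parabolic_solution
    (hcont : ContinuousOn (Function.uncurry u) (Icc 0 T ×ˢ Icc a b))
    (hu : HasParabolicDerivsOn u ut ux uxx (parabolicInterior T a b))
    (hκ : ∀ t x, (t, x) ∈ parabolicInterior T a b → 0 ≤ κ t x)
    (hγ : BddAbove (Function.uncurry γ '' parabolicInterior T a b))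
    (heq : ∀ t x, (t, x) ∈ parabolicInterior T a b →
      ut t x = κ t x * uxx t x + β t x * ux t x + γ t x * u t x)
    (hbdry : ∀ p ∈ parabolicBoundary T a b, Function.uncurry u p = 0) :
    ∀ p ∈ Icc 0 T ×ˢ Icc a b, Function.uncurry u p = 0 := by
  intro p hp
  have hle : Function.uncurry u p ≤ 0 := nonpos_of_parabolic_subsolution hcont hu hκ hγ
    (fun t x h ↦ (heq t x h).le) (fun q hq ↦ (hbdry q hq).le) p hp
  have hneg (t x : ℝ) (h : (t, x) ∈ parabolicInterior T a b) :
      (-ut) t x = κ t x * (-uxx) t x + β t x * (-ux) t x + γ t x * (-u) t x := by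
    simp only [Pi.neg_apply]
    linear_combination -heq t x h
  have hge : -Function.uncurry u p ≤ 0 := nonpos_of_parabolic_subsolution (u := -u) hcont.neg hu.neg
    hκ hγ (fun t x h ↦ (hneg t x h).le) (fun q hq ↦ (neg_eq_zero.2 (hbdry q hq)).le) p hp
  exact le_antisymm hle (neg_nonpos.1 hge)

lemma eqOn_parabolicBoundary {v : ℝ → ℝ → ℝ} (hinit : ∀ x ∈ Icc a b, u 0 x = v 0 x)
    (hleft : ∀ t ∈ Icc 0 T, u t a = v t a) (hright : ∀ t ∈ Icc 0 T, u t b = v t b) :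
    EqOn (Function.uncurry u) (Function.uncurry v) (parabolicBoundary T a b) := by
  rintro ⟨t, x⟩ ⟨⟨ht, hx⟩, hnot⟩
  change u t x = v t x
  rcases ht.1.eq_or_lt with rfl | ht0
  · exact hinit x hx
  rcases hx.1.eq_or_lt with rfl | hxa
  · exact hleft t ht
  rcases hx.2.eq_or_lt with rfl | hxb
  · exact hright t ht
  exact absurd ⟨⟨ht0, ht.2⟩, hxa, hxb⟩ hnot

end MaximumPrinciple

theorem burgers_uniqueness_general {ν T a b : ℝ} (hν : 0 ≤ ν)
    {f u₁ u₂ ut₁ ux₁ uxx₁ ut₂ ux₂ uxx₂ : ℝ → ℝ → ℝ}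
    (hcont₁ : ContinuousOn (Function.uncurry u₁) (Icc 0 T ×ˢ Icc a b))
    (hcont₂ : ContinuousOn (Function.uncurry u₂) (Icc 0 T ×ˢ Icc a b))
    (hu₁ : HasParabolicDerivsOn u₁ ut₁ ux₁ uxx₁ (parabolicInterior T a b))
    (hu₂ : HasParabolicDerivsOn u₂ ut₂ ux₂ uxx₂ (parabolicInterior T a b))
    (hux₂ : BddBelow (Function.uncurry ux₂ '' parabolicInterior T a b))
    (hPDE₁ : ∀ t x, (t, x) ∈ parabolicInterior T a b →
      ut₁ t x - ν * uxx₁ t x + u₁ t x * ux₁ t x = f t x)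
    (hPDE₂ : ∀ t x, (t, x) ∈ parabolicInterior T a b →
      ut₂ t x - ν * uxx₂ t x + u₂ t x * ux₂ t x = f t x)
    (hbdry : EqOn (Function.uncurry u₁) (Function.uncurry u₂) (parabolicBoundary T a b)) :
    EqOn (Function.uncurry u₁) (Function.uncurry u₂) (Icc 0 T ×ˢ Icc a b) := by
  have hγ : BddAbove (Function.uncurry (-ux₂) '' parabolicInterior T a b) := by
    obtain ⟨m, hm⟩ := hux₂
    refine ⟨-m, forall_mem_image.2 fun p hp ↦ ?_⟩
    exact neg_le_neg (hm (mem_image_of_mem _ hp))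
  have hlinear (t x : ℝ) (h : (t, x) ∈ parabolicInterior T a b) : (ut₁ - ut₂) t x =
      ν * (uxx₁ - uxx₂) t x + (-u₁) t x * (ux₁ - ux₂) t x + (-ux₂) t x * (u₁ - u₂) t x := by
    simp only [Pi.sub_apply, Pi.neg_apply]
    linear_combination hPDE₁ t x h - hPDE₂ t x h
  intro p hp
  exact sub_eq_zero.1 <|
    eq_zero_of_parabolic_solution (u := u₁ - u₂) (κ := fun _ _ ↦ ν) (hcont₁.sub hcont₂)
      (hu₁.sub hu₂) (fun _ _ _ ↦ hν) hγ hlinear (fun q hq ↦ sub_eq_zero.2 (hbdry hq)) p hp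

/-- Uniqueness of classical solutions of the Burgers equation on `[0,T] × [0,π]`
with Dirichlet boundary conditions: two solutions with the same initial data coincide. -/
theorem burgers_uniqueness
    (ν T : ℝ) (hν : 0 < ν) (hT : 0 < T)
    (f u₁ u₂ ut₁ ux₁ uxx₁ ut₂ ux₂ uxx₂ : ℝ → ℝ → ℝ)
    (hf : ContinuousOn (fun p : ℝ × ℝ => f p.1 p.2) (Icc 0 T ×ˢ Icc 0 Real.pi))
    (hu₁ : ContinuousOn (fun p : ℝ × ℝ => u₁ p.1 p.2) (Icc 0 T ×ˢ Icc 0 Real.pi))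
    (hut₁ : ContinuousOn (fun p : ℝ × ℝ => ut₁ p.1 p.2) (Icc 0 T ×ˢ Icc 0 Real.pi))
    (hux₁ : ContinuousOn (fun p : ℝ × ℝ => ux₁ p.1 p.2) (Icc 0 T ×ˢ Icc 0 Real.pi))
    (huxx₁ : ContinuousOn (fun p : ℝ × ℝ => uxx₁ p.1 p.2) (Icc 0 T ×ˢ Icc 0 Real.pi))
    (hu₂ : ContinuousOn (fun p : ℝ × ℝ => u₂ p.1 p.2) (Icc 0 T ×ˢ Icc 0 Real.pi))
    (hut₂ : ContinuousOn (fun p : ℝ × ℝ => ut₂ p.1 p.2) (Icc 0 T ×ˢ Icc 0 Real.pi))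
    (hux₂ : ContinuousOn (fun p : ℝ × ℝ => ux₂ p.1 p.2) (Icc 0 T ×ˢ Icc 0 Real.pi))
    (huxx₂ : ContinuousOn (fun p : ℝ × ℝ => uxx₂ p.1 p.2) (Icc 0 T ×ˢ Icc 0 Real.pi))
    (hdt₁ : ∀ t ∈ Icc (0:ℝ) T, ∀ x ∈ Icc (0:ℝ) Real.pi,
      HasDerivWithinAt (fun s => u₁ s x) (ut₁ t x) (Icc 0 T) t)
    (hdx₁ : ∀ t ∈ Icc (0:ℝ) T, ∀ x ∈ Icc (0:ℝ) Real.pi,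
      HasDerivWithinAt (fun y => u₁ t y) (ux₁ t x) (Icc 0 Real.pi) x)
    (hdxx₁ : ∀ t ∈ Icc (0:ℝ) T, ∀ x ∈ Icc (0:ℝ) Real.pi,
      HasDerivWithinAt (fun y => ux₁ t y) (uxx₁ t x) (Icc 0 Real.pi) x)
    (hdt₂ : ∀ t ∈ Icc (0:ℝ) T, ∀ x ∈ Icc (0:ℝ) Real.pi,
      HasDerivWithinAt (fun s => u₂ s x) (ut₂ t x) (Icc 0 T) t)
    (hdx₂ : ∀ t ∈ Icc (0:ℝ) T, ∀ x ∈ Icc (0:ℝ) Real.pi,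
      HasDerivWithinAt (fun y => u₂ t y) (ux₂ t x) (Icc 0 Real.pi) x)
    (hdxx₂ : ∀ t ∈ Icc (0:ℝ) T, ∀ x ∈ Icc (0:ℝ) Real.pi,
      HasDerivWithinAt (fun y => ux₂ t y) (uxx₂ t x) (Icc 0 Real.pi) x)
    (hPDE₁ : ∀ t ∈ Icc (0:ℝ) T, ∀ x ∈ Icc (0:ℝ) Real.pi,
      ut₁ t x - ν * uxx₁ t x + u₁ t x * ux₁ t x = f t x)
    (hPDE₂ : ∀ t ∈ Icc (0:ℝ) T, ∀ x ∈ Icc (0:ℝ) Real.pi,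
      ut₂ t x - ν * uxx₂ t x + u₂ t x * ux₂ t x = f t x)
    (hBC₁ : ∀ t ∈ Icc (0:ℝ) T, u₁ t 0 = 0 ∧ u₁ t Real.pi = 0)
    (hBC₂ : ∀ t ∈ Icc (0:ℝ) T, u₂ t 0 = 0 ∧ u₂ t Real.pi = 0)
    (hIC : ∀ x ∈ Icc (0:ℝ) Real.pi, u₁ 0 x = u₂ 0 x) :
    ∀ t ∈ Icc (0:ℝ) T, ∀ x ∈ Icc (0:ℝ) Real.pi, u₁ t x = u₂ t x := by
  have hsubset : parabolicInterior T 0 Real.pi ⊆ Icc 0 T ×ˢ Icc 0 Real.pi :=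
    parabolicInterior_subset_Icc_prod_Icc
  have hbdry : EqOn (Function.uncurry u₁) (Function.uncurry u₂) (parabolicBoundary T 0 Real.pi) :=
    eqOn_parabolicBoundary hIC (fun t ht ↦ (hBC₁ t ht).1.trans (hBC₂ t ht).1.symm)
      (fun t ht ↦ (hBC₁ t ht).2.trans (hBC₂ t ht).2.symm)
  exact fun t ht x hx ↦ burgers_uniqueness_general hν.le hu₁ hu₂
    (.of_hasDerivWithinAt_Icc hdt₁ hdx₁ hdxx₁) (.of_hasDerivWithinAt_Icc hdt₂ hdx₂ hdxx₂)
    (bddBelow_image_parabolicInterior hux₂) (fun t x h ↦ hPDE₁ t (hsubset h).1 x (hsubset h).2)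
    (fun t x h ↦ hPDE₂ t (hsubset h).1 x (hsubset h).2) hbdry (mk_mem_prod ht hx)
end

section
/- For every integer k ≥ 2, the real linear span of the set E_k ∪ { x ↦ ξ(x)·(ξ')′(x) + ξ'(x)·ξ′(x) : ξ ∈ E_k, ξ' ∈ E₁ } (where ξ′ and (ξ')′ denote derivatives) equals E_{k+1}, as subspaces of the space of functions from ℝ to ℝ. -/
/-!
For differentiable functions the symmetrized product `ξ ∂ₓξ' + ξ' ∂ₓξ` is the derivative of `ξ ξ'`,
and the product-to-sum formula gives
`(sin (a x) sin (b x))' = ((a + b) sin ((a + b) x) - (a - b) sin ((a - b) x)) / 2`.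
So the products of `E_k` and `E_l` stay in `E_{k+l}`. Conversely, if `E_{k+l}` has been reached and
`k ≥ 1`, then `a = k`, `b = l + 1` gives the next mode `sin ((k + l + 1) x)`: its coefficient does
not vanish, and the difference frequency `|k - l - 1|` is at most `k + l`.
-/

open Set

/-- `sineSpan k` is the real linear span of the functions `x ↦ sin (j x)` for `1 ≤ j ≤ k`,
regarded as a subspace of the space of functions from `ℝ` to `ℝ`. -/
def sineSpan (k : ℕ) : Submodule ℝ (ℝ → ℝ) :=
  Submodule.span ℝ {f : ℝ → ℝ | ∃ j : ℕ, 1 ≤ j ∧ j ≤ k ∧ f = fun x => Real.sin (j * x)}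

/-- The differentiable functions whose derivative lies in `S`. Differentiability is part of the
definition because `deriv` is additive only on differentiable functions. -/
def derivPreimage {𝕜 F : Type*} [NontriviallyNormedField 𝕜] [NormedAddCommGroup F]
    [NormedSpace 𝕜 F] (S : Submodule 𝕜 (𝕜 → F)) : Submodule 𝕜 (𝕜 → F) where
  carrier := {f | Differentiable 𝕜 f ∧ deriv f ∈ S}
  zero_mem' := ⟨differentiable_const 0, by simp⟩
  add_mem' := by
    rintro f g ⟨hf, hf'⟩ ⟨hg, hg'⟩
    have hderiv : deriv (f + g) = deriv f + deriv g := funext fun x => deriv_add (hf x) (hg x)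
    exact ⟨hf.add hg, hderiv ▸ S.add_mem hf' hg'⟩
  smul_mem' := by
    rintro c f ⟨hf, hf'⟩
    have hderiv : deriv (c • f) = c • deriv f := funext fun x => deriv_const_smul c (hf x)
    exact ⟨hf.const_smul c, hderiv ▸ S.smul_mem c hf'⟩

/-- The space `F(E', E)` of the paper: the span of `E` together with the symmetrized products
`ξ ∂ₓξ' + ξ' ∂ₓξ` of `ξ ∈ E` and `ξ' ∈ E'`. -/
def symmProductExtension (E E' : Submodule ℝ (ℝ → ℝ)) : Submodule ℝ (ℝ → ℝ) :=
  Submodule.span ℝ ((E : Set (ℝ → ℝ)) ∪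
    {g : ℝ → ℝ | ∃ ξ ∈ E, ∃ ξ' ∈ E', g = fun x => ξ x * deriv ξ' x + ξ' x * deriv ξ x})

lemma deriv_mul_eq_symmProduct {ξ ξ' : ℝ → ℝ} (hξ : Differentiable ℝ ξ)
    (hξ' : Differentiable ℝ ξ') :
    deriv (ξ * ξ') = fun x => ξ x * deriv ξ' x + ξ' x * deriv ξ x := by
  ext x
  rw [deriv_mul (hξ x) (hξ' x)]
  ring

lemma symmProductExtension_le_iff {E E' S : Submodule ℝ (ℝ → ℝ)}
    (hE : ∀ ξ ∈ E, Differentiable ℝ ξ) (hE' : ∀ ξ' ∈ E', Differentiable ℝ ξ') :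
    symmProductExtension E E' ≤ S ↔ E ≤ S ∧ E * E' ≤ derivPreimage S := by
  rw [symmProductExtension, Submodule.span_le, union_subset_iff, SetLike.coe_subset_coe,
    Submodule.mul_le]
  refine and_congr_right fun _ => ⟨fun h ξ hξ ξ' hξ' => ?_, ?_⟩
  · exact ⟨(hE ξ hξ).mul (hE' ξ' hξ'),
      h ⟨ξ, hξ, ξ', hξ', deriv_mul_eq_symmProduct (hE ξ hξ) (hE' ξ' hξ')⟩⟩
  · rintro h _ ⟨ξ, hξ, ξ', hξ', rfl⟩
    rw [← deriv_mul_eq_symmProduct (hE ξ hξ) (hE' ξ' hξ')]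
    exact (h ξ hξ ξ' hξ').2

/-- The function `x ↦ sin (a x)`. Real frequencies `a` allow differences of frequencies without
truncated subtraction. -/
noncomputable def sineMode (a : ℝ) : ℝ → ℝ := fun x => Real.sin (a * x)

lemma sineMode_zero : sineMode 0 = 0 := by
  ext x
  simp [sineMode]

lemma sineMode_neg (a : ℝ) : sineMode (-a) = -sineMode a := by
  ext x
  simp [sineMode]

lemma differentiable_sineMode (a : ℝ) : Differentiable ℝ (sineMode a) := by
  unfold sineMode
  fun_prop

lemma deriv_sineMode (a x : ℝ) : deriv (sineMode a) x = a * Real.cos (a * x) := by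
  have h : HasDerivAt (sineMode a) (Real.cos (a * x) * (a * 1)) x :=
    ((hasDerivAt_id x).const_mul a).sin
  rw [h.deriv]
  ring

lemma deriv_sineMode_mul_sineMode (a b : ℝ) :
    deriv (sineMode a * sineMode b) =
      ((a + b) / 2) • sineMode (a + b) - ((a - b) / 2) • sineMode (a - b) := by
  rw [deriv_mul_eq_symmProduct (differentiable_sineMode a) (differentiable_sineMode b)]
  ext x
  simp only [deriv_sineMode, sineMode, Pi.sub_apply, Pi.smul_apply, smul_eq_mul, add_mul, sub_mul,
    Real.sin_add, Real.sin_sub]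
  ring

lemma sineSpan_le_iff {k : ℕ} {S : Submodule ℝ (ℝ → ℝ)} :
    sineSpan k ≤ S ↔ ∀ j : ℕ, j ≤ k → sineMode j ∈ S := by
  rw [sineSpan, Submodule.span_le]
  constructor
  · intro h j hj
    rcases Nat.eq_zero_or_pos j with rfl | hpos
    · simp [sineMode_zero]
    · exact h ⟨j, hpos, hj, rfl⟩
  · rintro h _ ⟨j, -, hj, rfl⟩
    exact h j hj

lemma sineMode_natCast_mem_sineSpan {j k : ℕ} (h : j ≤ k) : sineMode j ∈ sineSpan k :=
  sineSpan_le_iff.1 le_rfl j h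

lemma sineMode_natCast_sub_mem_sineSpan {i j k : ℕ} (hi : i ≤ k) (hj : j ≤ k) :
    sineMode (i - j) ∈ sineSpan k := by
  rcases le_total j i with h | h
  · rw [← Nat.cast_sub h]
    exact sineMode_natCast_mem_sineSpan ((Nat.sub_le i j).trans hi)
  · rw [← neg_sub, sineMode_neg, ← Nat.cast_sub h]
    exact neg_mem (sineMode_natCast_mem_sineSpan ((Nat.sub_le j i).trans hj))

lemma sineSpan_mono : Monotone sineSpan := fun _ _ h =>
  sineSpan_le_iff.2 fun _ hj => sineMode_natCast_mem_sineSpan (hj.trans h)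

lemma differentiable_of_mem_sineSpan {k : ℕ} {ξ : ℝ → ℝ} (hξ : ξ ∈ sineSpan k) :
    Differentiable ℝ ξ := by
  have hle : sineSpan k ≤ derivPreimage ⊤ :=
    sineSpan_le_iff.2 fun j _ => ⟨differentiable_sineMode j, Submodule.mem_top⟩
  exact (hle hξ).1

lemma sineSpan_mul_sineSpan_le_derivPreimage (k l : ℕ) :
    sineSpan k * sineSpan l ≤ derivPreimage (sineSpan (k + l)) := by
  rw [sineSpan, sineSpan, Submodule.span_mul_span, Submodule.span_le]
  rintro _ ⟨_, ⟨i, -, hi, rfl⟩, _, ⟨j, -, hj, rfl⟩, rfl⟩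
  refine ⟨(differentiable_sineMode i).mul (differentiable_sineMode j), ?_⟩
  change deriv (sineMode i * sineMode j) ∈ sineSpan (k + l)
  have hsum : sineMode (i + j) ∈ sineSpan (k + l) := by
    exact_mod_cast sineMode_natCast_mem_sineSpan (add_le_add hi hj)
  have hdiff : sineMode (i - j) ∈ sineSpan (k + l) :=
    sineMode_natCast_sub_mem_sineSpan (by omega) (by omega)
  rw [deriv_sineMode_mul_sineMode]
  exact sub_mem (Submodule.smul_mem _ _ hsum) (Submodule.smul_mem _ _ hdiff)

lemma sineMode_add_mem {S : Submodule ℝ (ℝ → ℝ)} {a b : ℝ} (hab : a + b ≠ 0)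
    (hderiv : deriv (sineMode a * sineMode b) ∈ S) (hdiff : sineMode (a - b) ∈ S) :
    sineMode (a + b) ∈ S := by
  rw [deriv_sineMode_mul_sineMode, S.sub_mem_iff_left (S.smul_mem _ hdiff)] at hderiv
  exact (S.smul_mem_iff (div_ne_zero hab two_ne_zero)).1 hderiv

lemma sineSpan_add_le {k l : ℕ} (hk : 1 ≤ k) {S : Submodule ℝ (ℝ → ℝ)} (hle : sineSpan k ≤ S)
    (hmul : sineSpan k * sineSpan l ≤ derivPreimage S) : sineSpan (k + l) ≤ S := by
  induction l with
  | zero => exact hle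
  | succ l ih =>
    have hprev : sineSpan (k + l) ≤ S :=
      ih ((mul_le_mul' le_rfl (sineSpan_mono l.le_succ)).trans hmul)
    have hderiv : deriv (sineMode k * sineMode (l + 1 : ℕ)) ∈ S :=
      (hmul (Submodule.mul_mem_mul (sineMode_natCast_mem_sineSpan le_rfl)
        (sineMode_natCast_mem_sineSpan le_rfl))).2
    have hdiff : sineMode (k - (l + 1 : ℕ)) ∈ S :=
      hprev (sineMode_natCast_sub_mem_sineSpan (by omega) (by omega))
    have hnext : sineMode (k + (l + 1) : ℕ) ∈ S := by
      rw [Nat.cast_add]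
      exact sineMode_add_mem (by positivity) hderiv hdiff
    refine sineSpan_le_iff.2 fun j hj => ?_
    rcases Nat.le_succ_iff.1 hj with hj | rfl
    · exact sineSpan_le_iff.1 hprev j hj
    · exact hnext

theorem sineSpan_saturation_general {k : ℕ} (hk : 1 ≤ k) (l : ℕ) :
    symmProductExtension (sineSpan k) (sineSpan l) = sineSpan (k + l) := by
  have hiff (S : Submodule ℝ (ℝ → ℝ)) : symmProductExtension (sineSpan k) (sineSpan l) ≤ S ↔
      sineSpan k ≤ S ∧ sineSpan k * sineSpan l ≤ derivPreimage S :=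
    symmProductExtension_le_iff (fun _ => differentiable_of_mem_sineSpan)
      (fun _ => differentiable_of_mem_sineSpan)
  apply le_antisymm
  · exact (hiff _).2
      ⟨sineSpan_mono (Nat.le_add_right k l), sineSpan_mul_sineSpan_le_derivPreimage k l⟩
  · obtain ⟨hle, hmul⟩ := (hiff _).1 le_rfl
    exact sineSpan_add_le hk hle hmul

/-- Lemma 2.7 of the paper: `F(E₁, E_k) = E_{k+1}`, i.e. the span of `E_k` together with the
symmetrized products `ξ ∂ₓξ' + ξ' ∂ₓξ` with `ξ ∈ E_k`, `ξ' ∈ E₁` equals `E_{k+1}`. -/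
theorem sineSpan_saturation (k : ℕ) (hk : 2 ≤ k) :
    Submodule.span ℝ
      ((sineSpan k : Set (ℝ → ℝ)) ∪
        {g : ℝ → ℝ | ∃ ξ ∈ sineSpan k, ∃ ξ' ∈ sineSpan 1,
          g = fun x => ξ x * deriv ξ' x + ξ' x * deriv ξ x})
      = sineSpan (k + 1) :=
  sineSpan_saturation_general (one_le_two.trans hk) 1
end

section
/- Let ν > 0 and let k ≥ 2 be an integer. For every η₁ ∈ E_{k+1} and every δ > 0 there exist an integer n ≥ 1, positive real numbers α₁, …, αₙ with α₁ + ⋯ + αₙ = 1, and functions η, ζ¹, …, ζⁿ ∈ E_k such that for every continuously differentiable function u : [0,π] → ℝ one has ( ∫₀^π | η₁(x) − u(x)u′(x) − η(x) + Σⱼ₌₁ⁿ αⱼ ( (u(x)+ζʲ(x))(u′(x)+(ζʲ)′(x)) − ν (ζʲ)″(x) ) |² dx )^{1/2} ≤ δ. -/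
/-!
Averaging over the pair `ζ, -ζ` with weights `1/2` removes every term that is odd in `ζ`, so the
integrand no longer involves `u`: what remains is `η₁ - η + ζ ζ'`. For `ζ = a sin x + b sin kx`,
the product `ζ ζ'` is a combination of `sin 2x` and `sin (k-1)x`, which lie in `E_k` since `k ≥ 2`
and are absorbed into `η`, of `sin (k+1)x` with coefficient `a b (k+1)/2`, and of `sin 2kx` with
coefficient `b² k/2`. Prescribing the product `a b` cancels the top mode of `η₁`, while `b` may be
taken so small that the `sin 2kx` remainder is uniformly small.
-/

open Set intervalIntegral

/-- The sine mode of frequency `j`; the modes with `1 ≤ j ≤ k` are the generators of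
`sineSpan k`. -/
noncomputable def sinMode (j : ℕ) : ℝ → ℝ :=
  fun x => Real.sin (j * x)

lemma sinMode_mem_sineSpan {j k : ℕ} (hj : 1 ≤ j) (hjk : j ≤ k) : sinMode j ∈ sineSpan k :=
  Submodule.subset_span ⟨j, hj, hjk, rfl⟩

lemma mem_sineSpan_succ {k : ℕ} {f : ℝ → ℝ} :
    f ∈ sineSpan (k + 1) ↔ ∃ c : ℝ, ∃ g ∈ sineSpan k, f = c • sinMode (k + 1) + g := by
  have generators_succ :
      {f : ℝ → ℝ | ∃ j : ℕ, 1 ≤ j ∧ j ≤ k + 1 ∧ f = fun x => Real.sin (j * x)} =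
        insert (sinMode (k + 1))
          {f | ∃ j : ℕ, 1 ≤ j ∧ j ≤ k ∧ f = fun x => Real.sin (j * x)} := by
    ext f
    constructor
    · rintro ⟨j, hj, hjk, rfl⟩
      rcases Nat.le_succ_iff.1 hjk with hjk | rfl
      · exact .inr ⟨j, hj, hjk, rfl⟩
      · exact .inl rfl
    · rintro (rfl | ⟨j, hj, hjk, rfl⟩)
      · exact ⟨k + 1, by omega, le_rfl, rfl⟩
      · exact ⟨j, hj, by omega, rfl⟩
  rw [sineSpan, generators_succ, Submodule.mem_span_insert, sineSpan]

lemma hasDerivAt_sinMode (j : ℕ) (x : ℝ) :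
    HasDerivAt (sinMode j) (j * Real.cos (j * x)) x :=
  (hasDerivAt_const_mul (j : ℝ)).sin.congr_deriv (mul_comm _ _)

lemma two_sinModes_mul_deriv {m n : ℕ} (hmn : m ≤ n) (a b x : ℝ) :
    (a • sinMode m + b • sinMode n) x * deriv (a • sinMode m + b • sinMode n) x =
      a ^ 2 * m / 2 * sinMode (2 * m) x - a * b * (n - m) / 2 * sinMode (n - m) x
        + a * b * (n + m) / 2 * sinMode (n + m) x + b ^ 2 * n / 2 * sinMode (2 * n) x := by
  rw [(((hasDerivAt_sinMode m x).const_smul a).add ((hasDerivAt_sinMode n x).const_smul b)).deriv]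
  simp only [sinMode, Pi.add_apply, Pi.smul_apply, smul_eq_mul, Nat.cast_mul, Nat.cast_ofNat,
    Nat.cast_sub hmn, Nat.cast_add, mul_assoc (2 : ℝ), sub_mul, add_mul, Real.sin_two_mul,
    Real.sin_sub, Real.sin_add]
  ring

lemma exists_abs_sub_add_mul_deriv_le {k : ℕ} (hk : 2 ≤ k) {f : ℝ → ℝ}
    (hf : f ∈ sineSpan (k + 1)) {ε : ℝ} (hε : 0 < ε) :
    ∃ η ∈ sineSpan k, ∃ ζ ∈ sineSpan k, ∀ x, |f x - η x + ζ x * deriv ζ x| ≤ ε := by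
  obtain ⟨c, g, hg, rfl⟩ := mem_sineSpan_succ.1 hf
  obtain ⟨b, hb, remainder_coeff⟩ : ∃ b : ℝ, 0 < b ∧ b ^ 2 * k / 2 = ε := by
    refine ⟨√(2 * ε / k), by positivity, ?_⟩
    rw [Real.sq_sqrt (by positivity)]
    field_simp
  obtain ⟨a, top_coeff⟩ : ∃ a : ℝ, a * b * (k + 1) / 2 = -c :=
    ⟨-2 * c / ((k + 1) * b), by field_simp⟩
  refine ⟨g + (a ^ 2 / 2) • sinMode 2 - (a * b * (k - 1) / 2) • sinMode (k - 1), ?_,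
    a • sinMode 1 + b • sinMode k, ?_, fun x => ?_⟩
  · exact sub_mem
      (add_mem hg (Submodule.smul_mem _ _ (sinMode_mem_sineSpan one_le_two hk)))
      (Submodule.smul_mem _ _ (sinMode_mem_sineSpan (by omega) (by omega)))
  · exact add_mem (Submodule.smul_mem _ _ (sinMode_mem_sineSpan le_rfl (by omega)))
      (Submodule.smul_mem _ _ (sinMode_mem_sineSpan (by omega) le_rfl))
  · have expansion := two_sinModes_mul_deriv (by omega : 1 ≤ k) a b x
    rw [remainder_coeff, Nat.cast_one, top_coeff] at expansion
    rw [expansion]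
    calc
      _ = |ε * sinMode (2 * k) x| := by
        simp only [Pi.add_apply, Pi.sub_apply, Pi.smul_apply, smul_eq_mul]
        ring_nf
      _ = ε * |sinMode (2 * k) x| := by rw [abs_mul, abs_of_pos hε]
      _ ≤ ε := mul_le_of_le_one_right hε.le (Real.abs_sin_le_one _)

lemma shift_add_shift_neg {𝕜 : Type*} [NontriviallyNormedField 𝕜] (ν u u' : 𝕜) (ζ : 𝕜 → 𝕜)
    (x : 𝕜) :
    ((u + ζ x) * (u' + deriv ζ x) - ν * deriv (deriv ζ) x) +
        ((u + (-ζ) x) * (u' + deriv (-ζ) x) - ν * deriv (deriv (-ζ)) x) =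
      2 * (u * u' + ζ x * deriv ζ x) := by
  simp only [deriv.neg', Pi.neg_apply, deriv.fun_neg]
  ring

lemma sqrt_integral_sq_le {f : ℝ → ℝ} {a b C : ℝ} (hC : 0 ≤ C) (hf : ∀ x ∈ uIoc a b, |f x| ≤ C) :
    √(∫ x in a..b, f x ^ 2) ≤ C * √|b - a| := by
  have integral_le : ∫ x in a..b, f x ^ 2 ≤ C ^ 2 * |b - a| :=
    (Real.le_norm_self _).trans <| norm_integral_le_of_norm_le_const fun x hx => by
      simpa using pow_le_pow_left₀ (abs_nonneg _) (hf x hx) 2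
  calc
    √(∫ x in a..b, f x ^ 2) ≤ √(C ^ 2 * |b - a|) := Real.sqrt_le_sqrt integral_le
    _ = C * √|b - a| := by rw [Real.sqrt_mul (sq_nonneg C), Real.sqrt_sq hC]

theorem convexification_lemma_general (k : ℕ) (hk : 2 ≤ k)
    (η₁ : ℝ → ℝ) (hη₁ : η₁ ∈ sineSpan (k + 1)) (δ : ℝ) (hδ : 0 < δ) :
    ∃ (n : ℕ) (α : Fin n → ℝ) (η : ℝ → ℝ) (ζ : Fin n → ℝ → ℝ),
      1 ≤ n ∧ (∀ j, 0 < α j) ∧ (∑ j, α j = 1) ∧ η ∈ sineSpan k ∧ (∀ j, ζ j ∈ sineSpan k) ∧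
      ∀ (ν : ℝ) (u : ℝ → ℝ), DifferentiableOn ℝ u (Ioo 0 Real.pi) →
        Real.sqrt (∫ x in (0:ℝ)..Real.pi,
            (η₁ x - u x * deriv u x -
              (η x - ∑ j, α j *
                ((u x + ζ j x) * (deriv u x + deriv (ζ j) x) - ν * deriv (deriv (ζ j)) x))) ^ 2)
          ≤ δ := by
  obtain ⟨η, hη, ζ, hζ, approx⟩ :=
    exists_abs_sub_add_mul_deriv_le hk hη₁ (ε := δ / √Real.pi) (by positivity)
  refine ⟨2, fun _ => 1 / 2, η, ![ζ, -ζ], one_le_two, fun _ => by norm_num, by norm_num, hη,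
    Fin.forall_fin_two.2 ⟨hζ, neg_mem hζ⟩, fun ν u _ => ?_⟩
  refine (sqrt_integral_sq_le (C := δ / √Real.pi) (by positivity) fun x _ => ?_).trans_eq ?_
  · convert approx x using 2
    simp only [Fin.sum_univ_two, Matrix.cons_val_zero, Matrix.cons_val_one]
    linear_combination (1 / 2 : ℝ) * shift_add_shift_neg ν (u x) (deriv u x) ζ x
  · rw [sub_zero, abs_of_pos Real.pi_pos, div_mul_cancel₀ δ (by positivity)]

/-- Lemma 5.1 of the paper specialized to `N = E₁`, `G = E_k` (using `F(E₁,E_k) = E_{k+1}`):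
the nonlinear term `B(u) = u u'` can be compensated, uniformly in `u`, by a convex
combination of shifted nonlinear terms. -/
theorem convexification_lemma
    (ν : ℝ) (hν : 0 < ν) (k : ℕ) (hk : 2 ≤ k)
    (η₁ : ℝ → ℝ) (hη₁ : η₁ ∈ sineSpan (k + 1)) (δ : ℝ) (hδ : 0 < δ) :
    ∃ (n : ℕ) (α : Fin n → ℝ) (η : ℝ → ℝ) (ζ : Fin n → ℝ → ℝ),
      1 ≤ n ∧ (∀ j, 0 < α j) ∧ (∑ j, α j = 1) ∧ η ∈ sineSpan k ∧ (∀ j, ζ j ∈ sineSpan k) ∧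
      ∀ u : ℝ → ℝ, ContDiff ℝ 1 u →
        Real.sqrt (∫ x in (0:ℝ)..Real.pi,
            (η₁ x - u x * deriv u x -
              (η x - ∑ j, α j *
                ((u x + ζ j x) * (deriv u x + deriv (ζ j) x) - ν * deriv (deriv (ζ j)) x))) ^ 2)
          ≤ δ := by
  obtain ⟨n, α, η, ζ, hn, hα, hsum, hη, hζ, h⟩ := convexification_lemma_general k hk η₁ hη₁ δ hδ
  exact ⟨n, α, η, ζ, hn, hα, hsum, hη, hζ,
    fun u hu => h ν u (hu.differentiable one_ne_zero).differentiableOn⟩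
end
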